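/- arXiv:2202.05232 — 3 statements merged into one kernel-verified Lean document; each statement's English description precedes it below -/
import Mathlib

section
/- Suppose firms have linear preferences over workers and, for each firm f, the upper-bound constraint family ℋ_f is an intersecting family of subsets of W with integer quotas λ̄ given by a function g_f that is submodular on intersecting pairs of ℋ_f, i.e., λ̄_D = g_f(D) for all D ∈ ℋ_f (a polymatroid constraint structure). Then a stable arrangement exists. -/
open Finset

namespace TwoSidedMatching

variable {W F : Type*} [Fintype W] [DecidableEq W] [Fintype F] [DecidableEq F]

/-- The set of workers assigned to firm `f` under assignment `X`. -/
def assigned (X : W → Option F) (f : F) : Finset W :=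
  Finset.univ.filter fun w => X w = some f

/-- Payoff of worker `w`: `a w f + s w f` if matched to `f`, and `0` if unmatched. -/
def workerPayoff (a s : W → F → ℝ) (X : W → Option F) (w : W) : ℝ :=
  match X w with
  | some f => a w f + s w f
  | none => 0

/-- Payoff of firm `f`: value of its assigned set minus total salaries paid. -/
def firmPayoff (b : Finset W → F → ℝ) (s : W → F → ℝ) (X : W → Option F) (f : F) : ℝ :=
  b (assigned X f) f - ∑ w ∈ assigned X f, s w f

/-- An assignment is feasible if each firm's assigned set is feasible or empty. -/
def Feasible (𝒯 : F → Set (Finset W)) (X : W → Option F) : Prop :=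
  ∀ f : F, assigned X f ∈ 𝒯 f ∨ assigned X f = ∅

/-- r-feasibility: each firm's assigned set is feasible. -/
def RFeasible (𝒯 : F → Set (Finset W)) (X : W → Option F) : Prop :=
  ∀ f : F, assigned X f ∈ 𝒯 f

/-- A blocking coalition: a firm `f`, a feasible set `D ∈ 𝒯 f`, and salaries `r`
making all members of `D ∪ {f}` weakly better off and at least one strictly better off. -/
def Blocks (a : W → F → ℝ) (b : Finset W → F → ℝ) (𝒯 : F → Set (Finset W))
    (s : W → F → ℝ) (X : W → Option F) : Prop :=
  ∃ f : F, ∃ D ∈ 𝒯 f, ∃ r : W → ℝ,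
    (∀ w ∈ D, a w f + r w ≥ workerPayoff a s X w) ∧
    (b D f - ∑ w ∈ D, r w ≥ firmPayoff b s X f) ∧
    ((∃ w ∈ D, a w f + r w > workerPayoff a s X w) ∨
      b D f - ∑ w ∈ D, r w > firmPayoff b s X f)

/-- Stability: feasible, individually rational for workers and firms, and no blocking coalition. -/
def Stable (a : W → F → ℝ) (b : Finset W → F → ℝ) (𝒯 : F → Set (Finset W))
    (s : W → F → ℝ) (X : W → Option F) : Prop :=
  Feasible 𝒯 X ∧ (∀ w, 0 ≤ workerPayoff a s X w) ∧
    (∀ f, 0 ≤ firmPayoff b s X f) ∧ ¬ Blocks a b 𝒯 s X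

/-- r-stability: r-feasible, individually rational for workers, and no blocking coalition. -/
def RStable (a : W → F → ℝ) (b : Finset W → F → ℝ) (𝒯 : F → Set (Finset W))
    (s : W → F → ℝ) (X : W → Option F) : Prop :=
  RFeasible 𝒯 X ∧ (∀ w, 0 ≤ workerPayoff a s X w) ∧ ¬ Blocks a b 𝒯 s X

/-- Total match value of an assignment. -/
def totalValue (a : W → F → ℝ) (b : Finset W → F → ℝ) (X : W → Option F) : ℝ :=
  (∑ w : W, match X w with
    | some f => a w f
    | none => 0) +
  ∑ f : F, b (assigned X f) f

/-- Two sets are intersecting if their intersection and both differences are nonempty. -/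
def IntersectingSets (A B : Finset W) : Prop :=
  (A ∩ B).Nonempty ∧ (A \ B).Nonempty ∧ (B \ A).Nonempty

/-- An intersecting family: does not contain `∅` and is closed under
intersections and unions of intersecting members. -/
def IntersectingFamily (ℋ : Set (Finset W)) : Prop :=
  ∅ ∉ ℋ ∧ ∀ A ∈ ℋ, ∀ B ∈ ℋ, IntersectingSets A B → A ∩ B ∈ ℋ ∧ A ∪ B ∈ ℋ

/-- Submodularity on intersecting pairs of a family. -/
def SubmodularOnIntersecting (ℋ : Set (Finset W)) (g : Finset W → ℤ) : Prop :=
  ∀ A ∈ ℋ, ∀ B ∈ ℋ, IntersectingSets A B → g (A ∪ B) + g (A ∩ B) ≤ g A + g B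

/-- Supermodularity on intersecting pairs of a family. -/
def SupermodularOnIntersecting (ℋ : Set (Finset W)) (g : Finset W → ℤ) : Prop :=
  ∀ A ∈ ℋ, ∀ B ∈ ℋ, IntersectingSets A B → g A + g B ≤ g (A ∪ B) + g (A ∩ B)

/-- A hierarchy: `∅` is not a member and any two members are nested or disjoint. -/
def Hierarchy (ℋ : Set (Finset W)) : Prop :=
  ∅ ∉ ℋ ∧ ∀ A ∈ ℋ, ∀ B ∈ ℋ, A ⊆ B ∨ B ⊆ A ∨ A ∩ B = ∅

/-- Feasible sets under upper-bound quotas: `|D ∩ D'| ≤ lam D'` for every `D' ∈ ℋ`. -/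
def upperSets (ℋ : Set (Finset W)) (lam : Finset W → ℤ) : Set (Finset W) :=
  {D | ∀ D' ∈ ℋ, ((D ∩ D').card : ℤ) ≤ lam D'}

/-- Feasible sets under lower and upper quotas: `lo D' ≤ |D ∩ D'| ≤ hi D'` for `D' ∈ ℋ`. -/
def quotaSets (ℋ : Set (Finset W)) (lo hi : Finset W → ℤ) : Set (Finset W) :=
  {D | ∀ D' ∈ ℋ, lo D' ≤ ((D ∩ D').card : ℤ) ∧ ((D ∩ D').card : ℤ) ≤ hi D'}

/-- Feasibility for the matching LP with upper-bound constraints. -/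
def LPFeasible (ℋ : F → Set (Finset W)) (lam : F → Finset W → ℤ) (x : W → F → ℝ) : Prop :=
  (∀ w f, 0 ≤ x w f) ∧ (∀ w, ∑ f : F, x w f ≤ 1) ∧
    ∀ f : F, ∀ D ∈ ℋ f, ∑ w ∈ D, x w f ≤ (lam f D : ℝ)

/-- Feasibility for the matching LP with lower and upper bound constraints. -/
def LPLBFeasible (ℋ : F → Set (Finset W)) (lo hi : F → Finset W → ℤ) (x : W → F → ℝ) : Prop :=
  (∀ w f, 0 ≤ x w f) ∧ (∀ w, ∑ f : F, x w f ≤ 1) ∧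
    ∀ f : F, ∀ D ∈ ℋ f, (lo f D : ℝ) ≤ ∑ w ∈ D, x w f ∧ ∑ w ∈ D, x w f ≤ (hi f D : ℝ)

/-- The LP objective: total match value of a fractional assignment. -/
def LPobj (α : W → F → ℝ) (x : W → F → ℝ) : ℝ :=
  ∑ w : W, ∑ f : F, α w f * x w f


omit [Fintype W] in
/-- In an intersecting family with submodular quotas, the union of two non-disjoint members that are
both saturated by the feasible set `I` is again a saturated member. -/
theorem saturated_union {ℋ : Set (Finset W)} {g : Finset W → ℤ} (hfam : IntersectingFamily ℋ)
    (hsub : SubmodularOnIntersecting ℋ g) {I A B : Finset W} (hI : I ∈ upperSets ℋ g)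
    (hA : A ∈ ℋ) (hB : B ∈ ℋ) (hAI : ((I ∩ A).card : ℤ) = g A) (hBI : ((I ∩ B).card : ℤ) = g B)
    (hAB : (A ∩ B).Nonempty) : A ∪ B ∈ ℋ ∧ ((I ∩ (A ∪ B)).card : ℤ) = g (A ∪ B) := by
  by_cases h1 : A ⊆ B
  · rw [union_eq_right.2 h1]; exact ⟨hB, hBI⟩
  by_cases h2 : B ⊆ A
  · rw [union_eq_left.2 h2]; exact ⟨hA, hAI⟩
  have hint : IntersectingSets A B := ⟨hAB, sdiff_nonempty.2 h1, sdiff_nonempty.2 h2⟩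
  obtain ⟨hinter, hunion⟩ := hfam.2 A hA B hB hint
  refine ⟨hunion, ?_⟩
  have hs := hsub A hA B hB hint
  have hi := hI _ hinter
  have hu := hI _ hunion
  have hc := card_union_add_card_inter (I ∩ A) (I ∩ B)
  rw [← inter_union_distrib_left, ← inter_inter_distrib_left] at hc
  omega

/-- Feasible sets of a polymatroid constraint structure satisfy the augmentation axiom. -/
theorem upperSets_augment {ℋ : Set (Finset W)} {g : Finset W → ℤ} (hfam : IntersectingFamily ℋ)
    (hsub : SubmodularOnIntersecting ℋ g) {I J : Finset W} (hI : I ∈ upperSets ℋ g)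
    (hJ : J ∈ upperSets ℋ g) (hIJ : I.card < J.card) :
    ∃ e ∈ J, e ∉ I ∧ insert e I ∈ upperSets ℋ g := by
  classical
  by_contra! hcon
  let 𝒮 : Finset (Finset W) := univ.filter fun A => A ∈ ℋ ∧ ((I ∩ A).card : ℤ) = g A
  have mem_𝒮 {A} : A ∈ 𝒮 ↔ A ∈ ℋ ∧ ((I ∩ A).card : ℤ) = g A := by simp [𝒮]
  let 𝓜 : Finset (Finset W) := 𝒮.filter fun A => Maximal (· ∈ 𝒮) A
  have hdisj : ∀ A ∈ 𝓜, ∀ B ∈ 𝓜, A ≠ B → Disjoint A B := by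
    intro A hA B hB hne
    rw [mem_filter] at hA hB
    by_contra hnd
    rw [not_disjoint_iff_nonempty_inter] at hnd
    have hun := mem_𝒮.2 (saturated_union hfam hsub hI (mem_𝒮.1 hA.1).1 (mem_𝒮.1 hB.1).1
      (mem_𝒮.1 hA.1).2 (mem_𝒮.1 hB.1).2 hnd)
    exact hne ((hA.2.eq_of_le hun subset_union_left).trans
      (hB.2.eq_of_le hun subset_union_right).symm)
  have hcover : ∀ e ∈ J, e ∉ I → e ∈ 𝓜.biUnion id := by
    intro e heJ heI
    have hnot := hcon e heJ heI
    simp only [upperSets, Set.mem_ofPred_eq, not_forall, not_le] at hnot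
    obtain ⟨A, hA, hlt⟩ := hnot
    have hle := hI A hA
    have heA : e ∈ A := by
      by_contra heA
      rw [insert_inter_of_notMem heA] at hlt
      omega
    rw [insert_inter_of_mem heA, card_insert_of_notMem (by simp [heI])] at hlt
    have hAS : A ∈ 𝒮 := mem_𝒮.2 ⟨hA, by push_cast at hlt; omega⟩
    obtain ⟨B, hAB, hB⟩ := 𝒮.exists_le_maximal hAS
    exact mem_biUnion.2 ⟨B, mem_filter.2 ⟨hB.prop, hB⟩, hAB heA⟩
  have hcard (K : Finset W) : (K ∩ 𝓜.biUnion id).card = ∑ A ∈ 𝓜, (K ∩ A).card := by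
    rw [inter_biUnion, card_biUnion]
    · rfl
    · intro A hA B hB hne
      exact (hdisj A hA B hB hne).mono inter_subset_right inter_subset_right
  have h1 : (J ∩ 𝓜.biUnion id).card ≤ (I ∩ 𝓜.biUnion id).card := by
    rw [hcard, hcard]
    refine sum_le_sum fun A hA => ?_
    have hA' := mem_𝒮.1 (mem_filter.1 hA).1
    have := hJ A hA'.1
    omega
  have h2 : (J \ 𝓜.biUnion id).card ≤ (I \ 𝓜.biUnion id).card := by
    refine card_le_card fun e he => ?_
    rw [mem_sdiff] at he ⊢
    exact ⟨by_contra fun heI => he.2 (hcover e he.1 heI), he.2⟩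
  have h3 := card_inter_add_card_sdiff I (𝓜.biUnion id)
  have h4 := card_inter_add_card_sdiff J (𝓜.biUnion id)
  omega

/-- The feasible sets of a polymatroid constraint structure are the independent sets of a matroid. -/
theorem exists_matroid_upperSets {ℋ : Set (Finset W)} {g : Finset W → ℤ}
    (hpos : ∀ D ∈ ℋ, 0 ≤ g D) (hfam : IntersectingFamily ℋ)
    (hsub : SubmodularOnIntersecting ℋ g) :
    ∃ M : Matroid W, ∀ D : Finset W, M.Indep ↑D ↔ D ∈ upperSets ℋ g := by
  have hempty : ∅ ∈ upperSets ℋ g := fun D hD => by simpa using hpos D hD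
  have hmono : ∀ ⦃I J⦄, J ∈ upperSets ℋ g → I ⊆ J → I ∈ upperSets ℋ g := by
    intro I J hJ hIJ D hD
    have := hJ D hD
    have := card_le_card (inter_subset_inter_right hIJ (u := D))
    omega
  let M := IndepMatroid.ofFinset Set.univ (fun D : Finset W => D ∈ upperSets ℋ g) hempty hmono
    (fun _ _ hI hJ hIJ => upperSets_augment hfam hsub hI hJ hIJ) fun _ _ => Set.subset_univ _
  have hM : ∀ D : Finset W, M.Indep ↑D ↔ D ∈ upperSets ℋ g :=
    fun D => IndepMatroid.ofFinset_indep Set.univ _ hempty hmono _ _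
  exact ⟨M.matroid, hM⟩

/-- Symmetric exchange between independent sets of a matroid. -/
theorem _root_.Matroid.Indep.exists_symm_exchange {α : Type*} {M : Matroid α} {I J : Set α} {e : α}
    (hI : M.Indep I) (hJ : M.Indep J) (heI : e ∈ I) (heJ : e ∉ J) (hdep : ¬ M.Indep (insert e J)) :
    ∃ t ∈ J, t ∉ I ∧ M.Indep (insert t (I \ {e})) ∧ M.Indep (insert e J \ {t}) := by
  have heE : e ∈ M.E := hI.subset_ground heI
  have hecl : e ∈ M.closure J := by
    by_contra h
    exact hdep ((hJ.notMem_closure_iff_of_notMem heJ heE).1 h)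
  have hC := hJ.fundCircuit_isCircuit hecl heJ
  have heC := M.mem_fundCircuit e J
  have hI' : M.Indep (I \ {e}) := hI.sdiff _
  obtain ⟨t, htC, ht⟩ : ∃ t ∈ M.fundCircuit e J \ {e}, t ∉ M.closure (I \ {e}) := by
    by_contra! h
    exact hI.notMem_closure_sdiff_of_mem heI
      (M.closure_subset_closure_of_subset_closure h (hC.mem_closure_sdiff_singleton_of_mem heC))
  have htE : t ∈ M.E := hC.subset_ground htC.1
  rw [hI'.notMem_closure_iff htE] at ht
  have hne : t ≠ e := htC.2
  refine ⟨t, ?_, fun htI => ht.2 ⟨htI, hne⟩, ht.1, (hJ.mem_fundCircuit_iff hecl heJ).1 htC.1⟩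
  exact (M.fundCircuit_subset_insert e J htC.1).resolve_left hne

/-- `D` is a maximum-weight independent set of `M` for the weights `q`. -/
def IsMaxWeight (M : Matroid W) (q : W → ℝ) (D : Finset W) : Prop :=
  M.Indep ↑D ∧ ∀ D' : Finset W, M.Indep ↑D' → ∑ w ∈ D', q w ≤ ∑ w ∈ D, q w

omit [DecidableEq W] in
theorem exists_isMaxWeight (M : Matroid W) (q : W → ℝ) : ∃ D, IsMaxWeight M q D := by
  classical
  obtain ⟨D, hD, hmax⟩ := (univ.filter fun D : Finset W => M.Indep ↑D).exists_max_image
    (fun D => ∑ w ∈ D, q w) ⟨∅, by simp⟩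
  exact ⟨D, (mem_filter.1 hD).2, fun D' hD' => hmax D' (mem_filter.2 ⟨mem_univ _, hD'⟩)⟩

omit [Fintype W] in
theorem IsMaxWeight.nonneg {M : Matroid W} {q : W → ℝ} {D : Finset W} (hD : IsMaxWeight M q D)
    {w : W} (hw : w ∈ D) : 0 ≤ q w := by
  have h := hD.2 (D.erase w) (hD.1.subset (by simp))
  rw [← add_sum_erase D q hw] at h
  linarith

/-- Gross substitutes: when weights decrease, the members of a maximum-weight independent set whose
weights are unchanged remain together in some maximum-weight independent set. -/
theorem IsMaxWeight.exists_superset {M : Matroid W} {q q' : W → ℝ} {D S : Finset W}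
    (hD : IsMaxWeight M q D) (hSD : S ⊆ D) (hle : ∀ w, q' w ≤ q w) (heq : ∀ w ∈ S, q' w = q w) :
    ∃ D', S ⊆ D' ∧ IsMaxWeight M q' D' := by
  classical
  obtain ⟨E, hE, hmax⟩ := (univ.filter fun E : Finset W => IsMaxWeight M q' E).exists_max_image
    (fun E => (E ∩ S).card) ((exists_isMaxWeight M q').imp fun E hE => by simpa using hE)
  replace hE : IsMaxWeight M q' E := (mem_filter.1 hE).2
  replace hmax : ∀ E', IsMaxWeight M q' E' → (E' ∩ S).card ≤ (E ∩ S).card :=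
    fun E' hE' => hmax E' (mem_filter.2 ⟨mem_univ _, hE'⟩)
  refine ⟨E, fun s hs => ?_, hE⟩
  by_contra hsE
  have hsD := hSD hs
  have hqs := heq s hs
  by_cases hins : M.Indep ↑(insert s E)
  · have h0 := hD.nonneg hsD
    have hopt : IsMaxWeight M q' (insert s E) := by
      refine ⟨hins, fun D' hD' => (hE.2 D' hD').trans ?_⟩
      rw [sum_insert hsE]
      linarith
    have := hmax _ hopt
    rw [insert_inter_of_mem hs, card_insert_of_notMem (by simp [hsE])] at this
    omega
  · rw [coe_insert] at hins
    obtain ⟨t, htE, htD, h1, h2⟩ := hD.1.exists_symm_exchange hE.1 (mem_coe.2 hsD)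
      (by simpa using hsE) hins
    simp only [mem_coe] at htE htD
    have hts : t ≠ s := fun h => hsE (h ▸ htE)
    have hq := hD.2 (insert t (D.erase s)) (by simpa using h1)
    rw [sum_insert (by simp [htD]), ← add_sum_erase D q hsD] at hq
    have hsum : ∑ w ∈ insert s (E.erase t), q' w = q' s + ∑ w ∈ E.erase t, q' w :=
      sum_insert (by simp [hsE])
    have hopt : IsMaxWeight M q' (insert s (E.erase t)) := by
      refine ⟨h2.subset ?_, fun D' hD' => (hE.2 D' hD').trans ?_⟩
      · intro x hx
        simp only [coe_insert, coe_erase, Set.mem_insert_iff, Set.mem_sdiff, mem_coe,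
          Set.mem_singleton_iff] at hx ⊢
        rcases hx with rfl | hx
        · exact ⟨Or.inl rfl, hts.symm⟩
        · exact ⟨Or.inr hx.1, hx.2⟩
      · rw [hsum, ← add_sum_erase E q' htE]
        linarith [hle t]
    have htS : t ∉ S := fun h => htD (hSD h)
    have := hmax _ hopt
    rw [insert_inter_of_mem hs, card_insert_of_notMem (by simp [hsE]), erase_inter,
      erase_eq_of_notMem (by simp [htS])] at this
    omega

/-- The net weight of worker `w` for firm `f` in an ascending auction with increment `ε`: the price
of `w` is `n w * ε`, raised by one increment if `w` is not currently held by `f`. -/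
noncomputable def auctionWeight (α : W → F → ℝ) (ε : ℝ) (X : W → Option F) (n : W → ℕ) (f : F)
    (w : W) : ℝ :=
  α w f - n w * ε - if X w = some f then 0 else ε

/-- The states of the ascending auction: unassigned workers have price zero, and every firm can
extend the set it holds to a maximum-weight one. -/
def AuctionState (M : F → Matroid W) (α : W → F → ℝ) (ε : ℝ) (X : W → Option F)
    (n : W → ℕ) : Prop :=
  (∀ w, X w = none → n w = 0) ∧
    ∀ f, ∃ D, assigned X f ⊆ D ∧ IsMaxWeight (M f) (auctionWeight α ε X n f) D

omit [Fintype F] in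
theorem AuctionState.price_le {M : F → Matroid W} {α : W → F → ℝ} {ε K : ℝ} (hK : 0 ≤ K)
    (hα : ∀ w f, α w f ≤ K) {X : W → Option F} {n : W → ℕ} (h : AuctionState M α ε X n) (w : W) :
    n w * ε ≤ K := by
  rcases hX : X w with _ | f
  · simpa [h.1 w hX] using hK
  · obtain ⟨D, hXD, hD⟩ := h.2 f
    have := hD.nonneg (hXD (by simpa [assigned] using hX) : w ∈ D)
    simp only [auctionWeight, hX, if_true, sub_zero] at this
    linarith [hα w f]

omit [Fintype F] in
/-- If some firm wants strictly more than it holds, the auction can proceed, raising prices. -/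
theorem AuctionState.exists_step {M : F → Matroid W} {α : W → F → ℝ} {ε : ℝ} (hε : 0 < ε)
    {X : W → Option F} {n : W → ℕ} (h : AuctionState M α ε X n) {f : F}
    (hf : ¬ IsMaxWeight (M f) (auctionWeight α ε X n f) (assigned X f)) :
    ∃ X' n', AuctionState M α ε X' n' ∧ ∑ w, n w < ∑ w, n' w := by
  obtain ⟨D, hXD, hD⟩ := h.2 f
  have hXD' : ∀ w, X w = some f → w ∈ D := fun w hw => hXD (by simpa [assigned] using hw)
  obtain ⟨v, hvD, hvX⟩ : ∃ v ∈ D, X v ≠ some f := by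
    by_contra! hcon
    have : assigned X f = D := hXD.antisymm fun w hw => by simpa [assigned] using hcon w hw
    exact hf (this ▸ hD)
  let X' : W → Option F := fun w => if w ∈ D then some f else X w
  let n' : W → ℕ := fun w => if w ∈ D ∧ X w ≠ some f then n w + 1 else n w
  refine ⟨X', n', ⟨fun w hw => ?_, fun g => ?_⟩, ?_⟩
  · by_cases hwD : w ∈ D
    · simp [X', hwD] at hw
    · simp only [X', hwD, if_false] at hw
      simpa [n', hwD] using h.1 w hw
  · rcases eq_or_ne g f with rfl | hgf
    · refine ⟨D, fun w hw => ?_, ?_⟩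
      · by_contra hwD
        simp only [assigned, mem_filter, X', hwD, if_false] at hw
        exact hwD (hXD' w hw.2)
      · convert hD using 1
        funext w
        by_cases hwD : w ∈ D
        · by_cases hwX : X w = some g
          · simp [auctionWeight, X', n', hwD, hwX]
          · simp [auctionWeight, X', n', hwD, hwX]
            ring
        · simp [auctionWeight, X', n', hwD]
    · obtain ⟨E, hXE, hE⟩ := h.2 g
      have hfg : f ≠ g := hgf.symm
      refine hE.exists_superset (fun w hw => ?_) (fun w => ?_) (fun w hw => ?_)
      · refine hXE ?_
        by_cases hwD : w ∈ D
        · simp [assigned, X', hwD, hfg] at hw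
        · simpa [assigned, X', hwD] using hw
      · by_cases hwD : w ∈ D
        · by_cases hwX : X w = some f
          · simp [auctionWeight, X', n', hwD, hwX]
          · by_cases hwg : X w = some g
            · simp [auctionWeight, X', n', hwD, hwg, hgf, hfg]
              linarith
            · simp [auctionWeight, X', n', hwD, hwX, hwg, hfg]
              linarith
        · simp [auctionWeight, X', n', hwD]
      · by_cases hwD : w ∈ D
        · simp [assigned, X', hwD, hfg] at hw
        · simp [auctionWeight, X', n', hwD]
  · refine sum_lt_sum (fun w _ => ?_) ⟨v, mem_univ v, ?_⟩
    · simp only [n']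
      split_ifs <;> omega
    · simp [n', hvD, hvX]

omit [Fintype F] in
/-- The ascending auction terminates in an approximate competitive equilibrium. -/
theorem exists_auction_equilibrium (M : F → Matroid W) (α : W → F → ℝ) {ε K : ℝ} (hε : 0 < ε)
    (hK : 0 ≤ K) (hα : ∀ w f, α w f ≤ K) :
    ∃ X n, AuctionState M α ε X n ∧
      ∀ f, IsMaxWeight (M f) (auctionWeight α ε X n f) (assigned X f) := by
  let T : Set ℕ := {k | ∃ X n, AuctionState M α ε X n ∧ ∑ w, n w = k}
  have hT : T.Nonempty := by
    refine ⟨_, fun _ => none, fun _ => 0, ⟨fun _ _ => rfl, fun f => ?_⟩, rfl⟩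
    obtain ⟨D, hD⟩ := exists_isMaxWeight (M f) (auctionWeight α ε (fun _ => none) (fun _ => 0) f)
    exact ⟨D, by simp [assigned], hD⟩
  have hTb : BddAbove T := by
    refine ⟨∑ _w : W, ⌊K / ε⌋₊, ?_⟩
    rintro _ ⟨X, n, h, rfl⟩
    exact sum_le_sum fun w _ => Nat.le_floor ((le_div_iff₀ hε).2 (h.price_le hK hα w))
  obtain ⟨X, n, h, hk⟩ := Nat.sSup_mem hT hTb
  refine ⟨X, n, h, fun f => ?_⟩
  by_contra hf
  obtain ⟨X', n', h', hlt⟩ := h.exists_step hε hf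
  have := le_csSup hTb ⟨X', n', h', rfl⟩
  omega

/-- The price vectors in the box `[0, K]` supporting the assignment `X` up to an error `ε` for each
firm. -/
def approxPrices (M : F → Matroid W) (α : W → F → ℝ) (K ε : ℝ) (X : W → Option F) :
    Set (W → ℝ) :=
  {p | (∀ w, p w ∈ Set.Icc 0 K) ∧ (∀ w, X w = none → p w = 0) ∧
    ∀ f, ∀ D : Finset W, (M f).Indep ↑D →
      ∑ w ∈ D, (α w f - p w) ≤ ∑ w ∈ assigned X f, (α w f - p w) + ε}

omit [DecidableEq W] [Fintype F] in
theorem isCompact_approxPrices (M : F → Matroid W) (α : W → F → ℝ) (K ε : ℝ) (X : W → Option F) :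
    IsCompact (approxPrices M α K ε X) := by
  refine (isCompact_univ_pi fun _ : W => isCompact_Icc (a := (0 : ℝ)) (b := K)).of_isClosed_subset
    ?_ fun p hp w _ => hp.1 w
  simp only [approxPrices, Set.ofPred_and, Set.ofPred_forall]
  refine (isClosed_iInter fun w => isClosed_Icc.preimage (continuous_apply w)).inter
    ((isClosed_iInter fun w => isClosed_iInter fun _ =>
      isClosed_eq (continuous_apply w) continuous_const).inter
    (isClosed_iInter fun f => isClosed_iInter fun D => isClosed_iInter fun _ =>
      isClosed_le (by fun_prop) (by fun_prop)))

/-- Competitive equilibrium with matroid constraints: there are prices at which every firm holds a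
maximum-weight independent set and unassigned workers are free. -/
theorem exists_competitive_equilibrium (M : F → Matroid W) (α : W → F → ℝ) :
    ∃ (X : W → Option F) (p : W → ℝ), (∀ w, 0 ≤ p w) ∧ (∀ w, X w = none → p w = 0) ∧
      (∀ f, (M f).Indep ↑(assigned X f)) ∧
      ∀ f, ∀ D : Finset W, (M f).Indep ↑D →
        ∑ w ∈ D, (α w f - p w) ≤ ∑ w ∈ assigned X f, (α w f - p w) := by
  let K : ℝ := ∑ w, ∑ f, |α w f|
  have hK : 0 ≤ K := sum_nonneg fun w _ => sum_nonneg fun f _ => abs_nonneg _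
  have hα : ∀ w f, α w f ≤ K := fun w f =>
    (le_abs_self _).trans <| (single_le_sum (f := fun g => |α w g|)
      (fun g _ => abs_nonneg _) (mem_univ f)).trans <|
      single_le_sum (f := fun v => ∑ g, |α v g|)
        (fun v _ => sum_nonneg fun g _ => abs_nonneg _) (mem_univ w)
  let N : ℝ := Fintype.card W
  have happrox : ∀ k : ℕ, ∃ X : W → Option F, (∀ f, (M f).Indep ↑(assigned X f)) ∧
      (approxPrices M α K (N * (1 / (k + 1))) X).Nonempty := by
    intro k
    have hε : (0 : ℝ) < 1 / (k + 1) := Nat.one_div_pos_of_nat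
    obtain ⟨X, n, h, hopt⟩ := exists_auction_equilibrium M α hε hK hα
    set ε : ℝ := 1 / (k + 1)
    refine ⟨X, fun f => (hopt f).1, fun w => n w * ε, fun w => ⟨by positivity, h.price_le hK hα w⟩,
      fun w hw => by simp [h.1 w hw], fun f D hD => ?_⟩
    have hle := (hopt f).2 D hD
    have hright : ∑ w ∈ assigned X f, auctionWeight α ε X n f w =
        ∑ w ∈ assigned X f, (α w f - n w * ε) := by
      refine sum_congr rfl fun w hw => ?_
      simp [auctionWeight, (mem_filter.1 hw).2]
    have hleft : ∑ w ∈ D, (α w f - n w * ε) - N * ε ≤ ∑ w ∈ D, auctionWeight α ε X n f w := by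
      have hcard : (D.card : ℝ) * ε ≤ N * ε := by
        exact mul_le_mul_of_nonneg_right (Nat.cast_le.2 (card_le_univ D)) hε.le
      have hterm : ∑ w ∈ D, ((α w f - n w * ε) - ε) ≤ ∑ w ∈ D, auctionWeight α ε X n f w := by
        refine sum_le_sum fun w _ => ?_
        unfold auctionWeight
        split_ifs <;> linarith
      rw [sum_sub_distrib, sum_const, nsmul_eq_mul] at hterm
      linarith
    linarith
  choose X hX hne using happrox
  obtain ⟨Y, hY⟩ := Finite.exists_infinite_fiber X
  have hfreq : ∀ k : ℕ, ∃ m, k ≤ m ∧ X m = Y := by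
    intro k
    obtain ⟨m, hm, hkm⟩ := (Set.infinite_coe_iff.1 hY).exists_gt k
    exact ⟨m, hkm.le, hm⟩
  have hmono : ∀ {k m : ℕ}, k ≤ m →
      approxPrices M α K (N * (1 / (m + 1))) Y ⊆ approxPrices M α K (N * (1 / (k + 1))) Y := by
    intro k m hkm p hp
    refine ⟨hp.1, hp.2.1, fun f D hD => (hp.2.2 f D hD).trans ?_⟩
    gcongr
  obtain ⟨p, hp⟩ := IsCompact.nonempty_iInter_of_sequence_nonempty_isCompact_isClosed
    (fun k : ℕ => approxPrices M α K (N * (1 / (k + 1))) Y)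
    (fun k => hmono k.le_succ)
    (fun k => by
      obtain ⟨m, hkm, rfl⟩ := hfreq k
      exact (hne m).mono (hmono hkm))
    (isCompact_approxPrices ..)
    (fun k => (isCompact_approxPrices ..).isClosed)
  rw [Set.mem_iInter] at hp
  obtain ⟨m, -, hm⟩ := hfreq 0
  refine ⟨Y, p, fun w => ((hp 0).1 w).1, (hp 0).2.1, fun f => hm ▸ hX m f, fun f D hD => ?_⟩
  have hlim : Filter.Tendsto
      (fun k : ℕ => ∑ w ∈ assigned Y f, (α w f - p w) + N * (1 / ((k : ℝ) + 1))) Filter.atTop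
      (nhds (∑ w ∈ assigned Y f, (α w f - p w) + N * 0)) :=
    (tendsto_one_div_add_atTop_nhds_zero_nat.const_mul N).const_add _
  rw [mul_zero, add_zero] at hlim
  exact ge_of_tendsto' hlim fun k => (hp k).2.2 f D hD

/-- **Existence of stable arrangements under polymatroid constraints.** If firms have
linear preferences and, for each firm `f`, the upper-bound constraint family `ℋ f` is an
intersecting family with nonnegative integer quotas `lam f` that are submodular on
intersecting pairs, then a stable arrangement exists. -/
theorem stable_exists_of_polymatroid
    {W F : Type*} [Fintype W] [DecidableEq W] [Fintype F] [DecidableEq F]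
    (a c : W → F → ℝ) (ℋ : F → Set (Finset W)) (lam : F → Finset W → ℤ)
    (hpos : ∀ f : F, ∀ D ∈ ℋ f, 0 ≤ lam f D)
    (hfam : ∀ f : F, IntersectingFamily (ℋ f))
    (hsub : ∀ f : F, SubmodularOnIntersecting (ℋ f) (lam f)) :
    ∃ (X : W → Option F) (s : W → F → ℝ),
      Stable a (fun D f => ∑ w ∈ D, c w f) (fun f => upperSets (ℋ f) (lam f)) s X := by
  choose M hM using fun f => exists_matroid_upperSets (hpos f) (hfam f) (hsub f)
  obtain ⟨X, p, hp, hfree, hfeas, hopt⟩ :=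
    exists_competitive_equilibrium M fun w f => a w f + c w f
  let s : W → F → ℝ := fun w f => p w - a w f
  have hworker : ∀ w, workerPayoff a s X w = p w := by
    intro w
    rcases hX : X w with _ | f
    · simp [workerPayoff, hX, hfree w hX]
    · simp [workerPayoff, hX, s]
  have hfirm : ∀ f, firmPayoff (fun D f => ∑ w ∈ D, c w f) s X f =
      ∑ w ∈ assigned X f, (a w f + c w f - p w) := by
    intro f
    rw [firmPayoff, ← sum_sub_distrib]
    exact sum_congr rfl fun w _ => by ring
  refine ⟨X, s, fun f => Or.inl ((hM f _).1 (hfeas f)), fun w => (hp w).trans_eq (hworker w).symm,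
    fun f => ?_, ?_⟩
  · simpa [hfirm] using hopt f ∅ (by simp)
  · rintro ⟨f, D, hD, r, hr, hv, hstrict⟩
    have hle := hopt f D ((hM f D).2 hD)
    simp only [hworker, hfirm, ge_iff_le, gt_iff_lt] at hr hv hstrict
    have hsplit : ∑ w ∈ D, (a w f + c w f - p w) =
        (∑ w ∈ D, c w f - ∑ w ∈ D, r w) + (∑ w ∈ D, (a w f + r w) - ∑ w ∈ D, p w) := by
      simp only [sum_add_distrib, sum_sub_distrib]
      ring
    rcases hstrict with ⟨w, hw, hlt⟩ | hlt
    · linarith [sum_lt_sum hr ⟨w, hw, hlt⟩]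
    · linarith [sum_le_sum hr]

end TwoSidedMatching
end

section
/- Suppose firms have linear preferences over workers and, for each firm f, the upper-bound constraint family ℋ_f is a hierarchy with nonnegative integer quotas λ̄_D for D ∈ ℋ_f. Then a stable arrangement exists. -/
open Finset

namespace TwoSidedMatching

variable {W F : Type*} [Fintype W] [DecidableEq W] [Fintype F] [DecidableEq F]

/-- If all fibres over `U` have at least `n` elements, then `#U * n` bounds the size of the
preimage of `U`. -/
lemma card_mul_le_card_filter_mem {ι C : Type*} [DecidableEq C] (E : Finset ι) (r : ι → C)
    (U : Finset C) (n : ℕ) (hU : ∀ c ∈ U, n ≤ #{e ∈ E | r e = c}) :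
    #U * n ≤ #{e ∈ E | r e ∈ U} := by
  rw [card_eq_sum_card_fiberwise (f := r) (t := U) (by intro e he; simp_all), ← smul_eq_mul]
  refine card_nsmul_le_sum _ _ _ fun c hc => (hU c hc).trans (card_le_card ?_)
  intro e he
  simp only [mem_filter] at he ⊢
  exact ⟨⟨he.1, he.2 ▸ hc⟩, he.2⟩



/-- A nonempty finite set of edges of a bipartite multigraph carries a nonzero weighting that sums
to zero at every selected vertex, if all selected vertices have degree at least two. -/
lemma exists_ne_zero_balanced {ι A B : Type*} [Fintype ι] [DecidableEq ι] [DecidableEq A]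
    [DecidableEq B] (E : Finset ι) (hE : E.Nonempty) (p : ι → A) (q : ι → B)
    (S : Finset A) (T : Finset B)
    (hS : ∀ a ∈ S, 2 ≤ #{e ∈ E | p e = a}) (hT : ∀ b ∈ T, 2 ≤ #{e ∈ E | q e = b}) :
    ∃ d : ι → ℝ, d ≠ 0 ∧ (∀ e ∉ E, d e = 0) ∧ (∀ a ∈ S, ∑ e ∈ E with p e = a, d e = 0) ∧
      ∀ b ∈ T, ∑ e ∈ E with q e = b, d e = 0 := by
  by_contra! hcon
  let L : (ι → ℝ) →ₗ[ℝ] ((↥Eᶜ ⊕ S ⊕ T) → ℝ) :=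
    LinearMap.pi (Sum.elim (fun e => LinearMap.proj e.1)
      (Sum.elim (fun a => ∑ e ∈ E with p e = a, LinearMap.proj e)
        (fun b => ∑ e ∈ E with q e = b, LinearMap.proj e)))
  have hL1 : ∀ d (e : ↥Eᶜ), L d (Sum.inl e) = d e := fun d e => rfl
  have hL2 : ∀ d (a : S), L d (Sum.inr (Sum.inl a)) = ∑ e ∈ E with p e = a, d e := by
    intro d a; simp [L]
  have hL3 : ∀ d (b : T), L d (Sum.inr (Sum.inr b)) = ∑ e ∈ E with q e = b, d e := by
    intro d b; simp [L]
  have hinj : Function.Injective L := by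
    rw [← LinearMap.ker_eq_bot, LinearMap.ker_eq_bot']
    intro d hd
    by_contra hne
    obtain ⟨b, hb, hb'⟩ := hcon d hne
      (fun e he => by rw [← hL1 d ⟨e, by simpa using he⟩, hd]; rfl)
      (fun a ha => by rw [← hL2 d ⟨a, ha⟩, hd]; rfl)
    exact hb' (by rw [← hL3 d ⟨b, hb⟩, hd]; rfl)
  have hfin := LinearMap.finrank_le_finrank_of_injective hinj
  simp only [Module.finrank_fintype_fun_eq_card, Fintype.card_sum, Fintype.card_coe,
    card_compl] at hfin
  have hEι : #E ≤ Fintype.card ι := card_le_univ E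
  have hE0 : 0 < #E := hE.card_pos
  have h1 := card_mul_le_card_filter_mem E p S 2 hS
  have h2 := card_mul_le_card_filter_mem E q T 2 hT
  have h1' : #{e ∈ E | p e ∈ S} ≤ #E := card_filter_le _ _
  have h2' : #{e ∈ E | q e ∈ T} ≤ #E := card_filter_le _ _
  have hsurj : Function.Surjective L := by
    refine (LinearMap.injective_iff_surjective_of_finrank_eq_finrank ?_).1 hinj
    simp only [Module.finrank_fintype_fun_eq_card, Fintype.card_sum, Fintype.card_coe, card_compl]
    omega
  obtain ⟨d, hd⟩ := hsurj (Sum.elim 0 (Sum.elim 1 0))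
  have e1 := sum_fiberwise_of_maps_to (card_filter_eq_iff.1 (by omega : #{e ∈ E | p e ∈ S} = #E)) d
  have e2 := sum_fiberwise_of_maps_to (card_filter_eq_iff.1 (by omega : #{e ∈ E | q e ∈ T} = #E)) d
  rw [sum_congr rfl (g := fun _ => (1 : ℝ))
    (fun a ha => by rw [← hL2 d ⟨a, ha⟩, hd]; rfl)] at e1
  rw [sum_congr rfl (g := fun _ => (0 : ℝ))
    (fun b hb => by rw [← hL3 d ⟨b, hb⟩, hd]; rfl), ← e1] at e2
  simp only [sum_const_zero, sum_const, nsmul_eq_mul, mul_one] at e2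
  have : #S = 0 := by exact_mod_cast e2.symm
  omega


/-- **Lagrangian duality.** If `x₀` maximizes the total value over the fractional assignments in a
convex set `Q` that give no worker more than one firm, then worker prices `u` exist for
which relaxing the workers' constraints does not increase the value. -/
lemma exists_prices {W F : Type*} [Fintype W] [DecidableEq W] [Fintype F]
    (α : W → F → ℝ) (Q : Set (W → F → ℝ)) (hQ : Convex ℝ Q) (h0 : 0 ∈ Q)
    (x₀ : W → F → ℝ)
    (hopt : ∀ x ∈ Q, (∀ w, ∑ f, x w f ≤ 1) → LPobj α x ≤ LPobj α x₀) :
    ∃ u : W → ℝ, (∀ w, 0 ≤ u w) ∧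
      ∀ x ∈ Q, LPobj α x - ∑ w, u w * (∑ f, x w f - 1) ≤ LPobj α x₀ := by
  set m := LPobj α x₀ with hm
  let U : Set ((W → ℝ) × ℝ) := {z | (∀ w, z.1 w < 0) ∧ m < z.2}
  let Z : Set ((W → ℝ) × ℝ) := (fun x : W → F → ℝ => (fun w => ∑ f, x w f - 1, LPobj α x)) '' Q
  have hUo : IsOpen U := by
    simp only [U, Set.ofPred_and, Set.ofPred_forall]
    refine (isOpen_iInter_of_finite fun w => isOpen_lt (by fun_prop) (by fun_prop)).inter
      (isOpen_lt (by fun_prop) (by fun_prop))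
  have hUc : Convex ℝ U := by
    rintro ⟨y, t⟩ ⟨hy, ht⟩ ⟨y', t'⟩ ⟨hy', ht'⟩ p q hp hq hpq
    simp only [U, Set.mem_ofPred_eq, Prod.smul_mk, Prod.mk_add_mk, Pi.add_apply, Pi.smul_apply,
      smul_eq_mul] at *
    refine ⟨fun w => ?_, ?_⟩
    · have := (convex_Iio (0 : ℝ)) (hy w) (hy' w) hp hq hpq
      simpa using this
    · have := (convex_Ioi m) ht ht' hp hq hpq
      simpa using this
  have hZc : Convex ℝ Z := by
    rintro _ ⟨x, hx, rfl⟩ _ ⟨x', hx', rfl⟩ p q hp hq hpq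
    refine ⟨p • x + q • x', hQ hx hx' hp hq hpq, ?_⟩
    refine Prod.ext (funext fun w => ?_) ?_
    · simp only [Pi.add_apply, Pi.smul_apply, smul_eq_mul, Prod.fst_add, Prod.smul_fst,
        sum_add_distrib, ← mul_sum]
      linear_combination hpq
    · simp only [LPobj, Pi.add_apply, Pi.smul_apply, smul_eq_mul, Prod.snd_add, Prod.smul_snd,
        mul_add, sum_add_distrib, mul_sum, mul_left_comm]
  have hdisj : Disjoint U Z := by
    rw [Set.disjoint_left]
    rintro _ ⟨hy, ht⟩ ⟨x, hx, rfl⟩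
    exact absurd (hopt x hx fun w => by linarith [hy w]) (not_le.2 ht)
  obtain ⟨φ, k, hφU, hφZ⟩ := geometric_hahn_banach_open hUc hUo hZc hdisj
  let g : W → ℝ := fun w => φ (Pi.single w 1, 0)
  let μ : ℝ := - φ (0, 1)
  have hφ : ∀ y t, φ (y, t) = ∑ w, g w * y w - μ * t := by
    intro y t
    have h : (y, t) = ∑ w, y w • ((Pi.single w 1, 0) : (W → ℝ) × ℝ) + t • (0, 1) := by
      refine Prod.ext (funext fun w => ?_) ?_
      · simp [Prod.fst_sum, Finset.sum_apply, Pi.single_apply]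
      · simp [Prod.snd_sum]
    rw [h, map_add, map_sum, map_smul]
    simp only [map_smul, smul_eq_mul, g, μ]
    rw [sum_congr rfl fun w _ => mul_comm _ _]
    ring
  have hφU' : ∀ y : W → ℝ, (∀ w, y w ≤ 0) → ∀ t, m ≤ t → φ (y, t) ≤ k := by
    intro y hy t ht
    have hmem : ∀ ε : ℝ, 0 < ε → φ (y, t) + ε * φ (fun _ => -1, 1) < k := by
      intro ε hε
      rw [← smul_eq_mul, ← map_smul, ← map_add]
      refine hφU _ ⟨fun w => ?_, ?_⟩
      · simpa using by linarith [hy w]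
      · simpa using by linarith
    have hlim : Filter.Tendsto (fun ε : ℝ => φ (y, t) + ε * φ (fun _ => -1, 1))
        (nhdsWithin 0 (Set.Ioi 0)) (nhds (φ (y, t) + 0 * φ (fun _ => -1, 1))) :=
      tendsto_nhdsWithin_of_tendsto_nhds
        ((continuous_const.add (continuous_id.mul continuous_const)).tendsto 0)
    rw [zero_mul, add_zero] at hlim
    exact le_of_tendsto hlim (eventually_nhdsWithin_of_forall fun ε hε => (hmem ε hε).le)
  have hrec : ∀ p q : ℝ, (∀ r : ℝ, 0 ≤ r → p + r * q ≤ k) → q ≤ 0 := by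
    intro p q h
    by_contra! hq
    have hpk : p ≤ k := by simpa using h 0 le_rfl
    have := h ((k - p) / q + 1) (by positivity [sub_nonneg.2 hpk])
    field_simp at this
    linarith
  have hg : ∀ w, 0 ≤ g w := by
    intro w
    have := hrec (φ (0, m)) (-g w) fun r hr => by
      have h := hφU' (Pi.single w (-r)) (fun v => by
        by_cases hv : v = w <;> simp [hv, hr]) m le_rfl
      rw [hφ] at h ⊢
      simp [Pi.single_apply] at h ⊢
      linarith
    linarith
  have hμ : 0 ≤ μ := by
    have := hrec (φ (0, m)) (-μ) fun r hr => by
      have h := hφU' 0 (fun v => le_rfl) (m + r) (by linarith)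
      rw [hφ] at h ⊢
      linarith
    linarith
  have hk : - (μ * m) ≤ k := by
    have := hφU' 0 (fun _ => le_rfl) m le_rfl
    rw [hφ] at this
    simpa using this
  have hZ : ∀ x ∈ Q, k ≤ ∑ w, g w * (∑ f, x w f - 1) - μ * LPobj α x := by
    intro x hx
    rw [← hφ]
    exact hφZ _ ⟨x, hx, rfl⟩
  have hμ0 : 0 < μ := by
    refine lt_of_le_of_ne hμ fun h => ?_
    have h1 := hZ 0 h0
    have h2 := hφU (fun _ => -1, m + 1) ⟨fun _ => by norm_num, by simp⟩
    have h3 : ∑ w, g w ≤ 0 := by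
      simp [← h] at h1 hk
      linarith
    have h4 : ∀ w, g w = 0 := by
      have := (sum_eq_zero_iff_of_nonneg fun w _ => hg w).1
        (le_antisymm h3 (sum_nonneg fun w _ => hg w))
      simpa using this
    rw [hφ] at h2
    simp [← h, h4] at h1 h2 hk
    linarith
  refine ⟨fun w => g w / μ, fun w => div_nonneg (hg w) hμ, fun x hx => ?_⟩
  have h := hk.trans (hZ x hx)
  have e : ∑ w, g w / μ * (∑ f, x w f - 1) = (∑ w, g w * (∑ f, x w f - 1)) / μ := by
    rw [sum_div]
    exact sum_congr rfl fun w _ => by ring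
  rw [e, sub_le_iff_le_add, ← sub_le_iff_le_add', le_div_iff₀ hμ0]
  linarith

/-- If a function takes integer sums on the members of a hierarchy, then its sum over the union of
the hierarchy is an integer. -/
lemma exists_int_sum_biUnion {W : Type*} [DecidableEq W] (𝓛 : Finset (Finset W))
    (h𝓛 : Hierarchy (𝓛 : Set (Finset W))) (g : W → ℝ)
    (hg : ∀ D ∈ 𝓛, ∃ n : ℤ, ∑ w ∈ D, g w = n) :
    ∃ n : ℤ, ∑ w ∈ 𝓛.biUnion id, g w = n := by
  induction 𝓛 using Finset.strongInduction with
  | H 𝓛 ih =>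
    obtain rfl | hne := 𝓛.eq_empty_or_nonempty
    · exact ⟨0, by simp⟩
    obtain ⟨D, hD, hmax⟩ := 𝓛.exists_max_image card hne
    have hDne : D ≠ ∅ := fun h => h𝓛.1 (by simpa [h] using hD)
    obtain ⟨n, hn⟩ := hg D hD
    obtain ⟨m, hm⟩ := ih {A ∈ 𝓛 | Disjoint D A}
      ⟨filter_subset _ _, fun h => hDne (by simpa using (mem_filter.1 (h hD)).2)⟩
      ⟨fun h => h𝓛.1 (by simpa using (mem_filter.1 (by exact_mod_cast h)).1),
        fun A hA B hB => h𝓛.2 A (by simp_all) B (by simp_all)⟩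
      fun A hA => hg A (mem_filter.1 hA).1
    have hunion : 𝓛.biUnion id = D ∪ ({A ∈ 𝓛 | Disjoint D A} : Finset _).biUnion id := by
      ext w
      simp only [mem_biUnion, id, mem_union, mem_filter]
      constructor
      · rintro ⟨A, hA, hw⟩
        rcases h𝓛.2 D hD A hA with h | h | h
        · exact Or.inl (eq_of_subset_of_card_le h (hmax A hA) ▸ hw)
        · exact Or.inl (h hw)
        · exact Or.inr ⟨A, ⟨hA, disjoint_iff_inter_eq_empty.2 h⟩, hw⟩
      · rintro (hw | ⟨A, ⟨hA, -⟩, hw⟩)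
        exacts [⟨D, hD, hw⟩, ⟨A, hA, hw⟩]
    refine ⟨n + m, ?_⟩
    rw [hunion, sum_union, hn, hm, Int.cast_add]
    rw [disjoint_biUnion_right]
    exact fun A hA => (mem_filter.1 hA).2

/-- If a function takes integer sums on the members of a hierarchy, then it does so on every
nonempty class of points that lie in the same, nonempty, collection of members. -/
lemma exists_int_sum_class (𝓛 : Finset (Finset W)) (h𝓛 : Hierarchy (𝓛 : Set (Finset W)))
    (g : W → ℝ) (hg : ∀ D ∈ 𝓛, ∃ n : ℤ, ∑ w ∈ D, g w = n) (w₀ : W)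
    (hw₀ : ({D ∈ 𝓛 | w₀ ∈ D} : Finset _).Nonempty) :
    ∃ n : ℤ, ∑ w with ({D ∈ 𝓛 | w ∈ D} : Finset _) = ({D ∈ 𝓛 | w₀ ∈ D} : Finset _), g w = n := by
  obtain ⟨M, hM, hmin⟩ := exists_min_image _ card hw₀
  simp only [mem_filter, and_imp] at hM hmin
  obtain ⟨n, hn⟩ := hg M hM.1
  obtain ⟨m, hm⟩ := exists_int_sum_biUnion {D ∈ 𝓛 | D ⊂ M}
    ⟨fun h => h𝓛.1 (by simpa using (mem_filter.1 (by exact_mod_cast h)).1),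
      fun A hA B hB => h𝓛.2 A (by simp_all) B (by simp_all)⟩ g
    fun A hA => hg A (mem_filter.1 hA).1
  have hMsub : ∀ D ∈ 𝓛, w₀ ∈ D → M ⊆ D := by
    intro D hD hw
    rcases h𝓛.2 M hM.1 D hD with h | h | h
    · exact h
    · exact (eq_of_subset_of_card_le h (hmin D hD hw)).ge
    · exact absurd (mem_inter.2 ⟨hM.2, hw⟩) (by simp [h])
  have hclass : ({w | ({D ∈ 𝓛 | w ∈ D} : Finset _) = ({D ∈ 𝓛 | w₀ ∈ D} : Finset _)} : Finset W) =
      M \ ({D ∈ 𝓛 | D ⊂ M} : Finset _).biUnion id := by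
    ext w
    simp only [mem_filter, mem_univ, true_and, mem_sdiff, mem_biUnion, id, not_exists, not_and,
      and_imp, Finset.ext_iff, and_congr_right_iff]
    constructor
    · intro h
      exact ⟨(h M hM.1).2 hM.2, fun D hD hDM hw => hDM.2 (hMsub D hD ((h D hD).1 hw))⟩
    · rintro ⟨hwM, h⟩ D hD
      refine ⟨fun hw => ?_, fun hw => hMsub D hD hw hwM⟩
      rcases h𝓛.2 M hM.1 D hD with h' | h' | h'
      · exact h' hM.2
      · by_contra hw0
        exact h D hD ⟨h', fun h'' => hw0 (h'' hM.2)⟩ hw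
      · exact absurd (mem_inter.2 ⟨hwM, hw⟩) (by simp [h'])
  refine ⟨n - m, ?_⟩
  rw [hclass, sum_sdiff_eq_sub, hn, hm, Int.cast_sub]
  exact biUnion_subset.2 fun A hA => (mem_filter.1 hA).2.1

/-- Numbers in `[0, 1]` with an integer sum cannot have exactly one fractional member. -/
lemma two_le_card_fractional {κ : Type*} (s : Finset κ) (g : κ → ℝ)
    (h0 : ∀ k ∈ s, 0 ≤ g k) (h1 : ∀ k ∈ s, g k ≤ 1) (hint : ∃ n : ℤ, ∑ k ∈ s, g k = n)
    (hne : ∃ k ∈ s, g k ≠ 0 ∧ g k ≠ 1) : 2 ≤ #{k ∈ s | g k ≠ 0 ∧ g k ≠ 1} := by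
  by_contra! hlt
  obtain ⟨k, hk, hk'⟩ := hne
  have hkm : k ∈ ({k ∈ s | g k ≠ 0 ∧ g k ≠ 1} : Finset κ) := mem_filter.2 ⟨hk, hk'⟩
  have huniq : ∀ j ∈ s, j ≠ k → g j = 0 ∨ g j = 1 := by
    intro j hj hjk
    by_contra! hj'
    exact hjk (card_le_one.1 (by omega) j (mem_filter.2 ⟨hj, hj'⟩) k hkm)
  classical
  obtain ⟨n, hn⟩ := hint
  have hrest : ∃ m : ℤ, ∑ j ∈ s.erase k, g j = m := by
    refine ⟨∑ j ∈ s.erase k, if g j = 0 then 0 else 1, ?_⟩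
    push_cast
    refine sum_congr rfl fun j hj => ?_
    rw [mem_erase] at hj
    rcases huniq j hj.2 hj.1 with h | h <;> simp [h]
  obtain ⟨m, hm⟩ := hrest
  rw [← add_sum_erase s g hk, hm] at hn
  have hgk : g k = ((n - m : ℤ) : ℝ) := by push_cast; linarith
  have hpos : (0 : ℝ) < g k := lt_of_le_of_ne (h0 k hk) hk'.1.symm
  have hlt1 : g k < 1 := lt_of_le_of_ne (h1 k hk) hk'.2
  rw [hgk] at hpos hlt1
  norm_cast at hpos hlt1
  omega

lemma eventually_add_mul_le {p q r : ℝ} (h : p ≤ r) (h' : p = r → q = 0) :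
    ∀ᶠ η in nhds (0 : ℝ), p + η * q ≤ r := by
  rcases h.eq_or_lt with h | h
  · simp [h' h, h]
  · have hc : Filter.Tendsto (fun η : ℝ => p + η * q) (nhds 0) (nhds (p + 0 * q)) :=
      (continuous_const.add (continuous_id.mul continuous_const)).tendsto 0
    exact (hc.eventually_lt_const (by simpa using h)).mono fun _ => le_of_lt

/-- The matching polytope of hierarchical upper-bound constraints has integral extreme points. -/
lemma eq_zero_or_one_of_mem_extremePoints (ℋ : F → Set (Finset W)) (lam : F → Finset W → ℤ)
    (hhier : ∀ f, Hierarchy (ℋ f)) (x : W → F → ℝ)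
    (hx : x ∈ Set.extremePoints ℝ {x | LPFeasible ℋ lam x}) (w : W) (f : F) :
    x w f = 0 ∨ x w f = 1 := by
  classical
  obtain ⟨⟨hx0, hxW, hxF⟩, hext⟩ := hx
  have hx1 : ∀ w f, x w f ≤ 1 := fun w f =>
    (single_le_sum (fun g _ => hx0 w g) (mem_univ f)).trans (hxW w)
  by_contra! hfrac
  let E : Finset (W × F) := {e | x e.1 e.2 ≠ 0 ∧ x e.1 e.2 ≠ 1}
  have hE : ∀ w f, (w, f) ∈ E ↔ x w f ≠ 0 ∧ x w f ≠ 1 := by simp [E]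
  let 𝓛 : F → Finset (Finset W) := fun f => {D | D ∈ ℋ f ∧ ∑ w ∈ D, x w f = lam f D}
  have h𝓛mem : ∀ f D, D ∈ 𝓛 f ↔ D ∈ ℋ f ∧ ∑ w ∈ D, x w f = lam f D := by simp [𝓛]
  have h𝓛 : ∀ f, Hierarchy (𝓛 f : Set (Finset W)) := fun f =>
    ⟨fun h => (hhier f).1 ((h𝓛mem f _).1 (by exact_mod_cast h)).1,
      fun A hA B hB => (hhier f).2 A ((h𝓛mem f _).1 (by exact_mod_cast hA)).1
        B ((h𝓛mem f _).1 (by exact_mod_cast hB)).1⟩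
  let τ : F → W → Finset (Finset W) := fun f w => {D ∈ 𝓛 f | w ∈ D}
  let q : W × F → F × Finset (Finset W) := fun e => (e.2, τ e.2 e.1)
  obtain ⟨d, hd, hdE, hdS, hdT⟩ := exists_ne_zero_balanced E ⟨(w, f), (hE w f).2 hfrac⟩ Prod.fst q
    {v ∈ E.image Prod.fst | ∑ g, x v g = 1} {b ∈ E.image q | b.2.Nonempty}
    (by
      intro v hv
      simp only [mem_filter, mem_image, Prod.exists, exists_and_right, exists_eq_right] at hv
      obtain ⟨⟨g, hg⟩, hsum⟩ := hv
      refine (two_le_card_fractional univ (x v) (fun g _ => hx0 v g) (fun g _ => hx1 v g)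
        ⟨1, by simpa using hsum⟩ ⟨g, mem_univ g, (hE v g).1 hg⟩).trans
        (card_le_card_of_injOn (fun g => (v, g)) ?_ (by intro; simp))
      intro g hg
      simpa [hE] using hg)
    (by
      rintro ⟨g, 𝒟⟩ hb
      simp only [mem_filter, mem_image, Prod.exists, q, Prod.mk.injEq] at hb
      obtain ⟨⟨v, g, hv, rfl, rfl⟩, hne⟩ := hb
      refine (two_le_card_fractional {v' | τ g v' = τ g v} (fun v' => x v' g)
        (fun v' _ => hx0 v' g) (fun v' _ => hx1 v' g)
        (exists_int_sum_class (𝓛 g) (h𝓛 g) (fun v' => x v' g)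
          (fun D hD => ⟨lam g D, ((h𝓛mem g D).1 hD).2⟩) v hne)
        ⟨v, by simp, (hE v g).1 hv⟩).trans
        (card_le_card_of_injOn (fun v' => (v', g)) ?_ (by intro; simp))
      intro v' hv'
      simp at hv'
      simp [hE, q, hv'])
  have hdW : ∀ v, ∑ g, x v g = 1 → ∑ g, d (v, g) = 0 := by
    intro v hv
    by_cases hvE : v ∈ E.image Prod.fst
    · rw [← hdS v (mem_filter.2 ⟨hvE, hv⟩)]
      symm
      refine sum_of_injOn Prod.snd ?_ (by simp [Set.MapsTo]) ?_ ?_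
      · rintro ⟨a, b⟩ h ⟨a', b'⟩ h' hb
        simp_all
      · intro g _ hg
        refine hdE _ fun h => hg ⟨(v, g), by simp [h], rfl⟩
      · rintro ⟨a, b⟩ h
        simp only [mem_filter] at h
        simp [← h.2]
    · exact sum_eq_zero fun g _ => hdE _ fun h => hvE (mem_image_of_mem Prod.fst h)
  have hdF : ∀ g, ∀ D ∈ 𝓛 g, ∑ v ∈ D, d (v, g) = 0 := by
    intro g D hD
    rw [← sum_fiberwise D (τ g)]
    refine sum_eq_zero fun 𝒟 _ => ?_
    by_cases h𝒟 : (g, 𝒟) ∈ ({b ∈ E.image q | b.2.Nonempty} : Finset _) ∧ D ∈ 𝒟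
    · rw [← hdT _ h𝒟.1]
      symm
      refine sum_of_injOn Prod.fst ?_ ?_ ?_ ?_
      · rintro ⟨a, b⟩ h ⟨a', b'⟩ h' hb
        simp_all [q]
      · rintro ⟨a, b⟩ h
        simp only [coe_filter, Set.mem_ofPred_eq, q, Prod.mk.injEq] at h ⊢
        obtain ⟨h, rfl, rfl⟩ := h
        exact ⟨(mem_filter.1 h𝒟.2).2, rfl⟩
      · intro v hv hv'
        refine hdE _ fun h => hv' ⟨(v, g), by simpa [h, q] using (mem_filter.1 hv).2, rfl⟩
      · rintro ⟨a, b⟩ h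
        simp only [mem_filter, q, Prod.mk.injEq] at h
        simp [← h.2.1]
    · refine sum_eq_zero fun v hv => hdE _ fun h => h𝒟 ?_
      obtain ⟨hvD, rfl⟩ := mem_filter.1 hv
      have hDm : D ∈ τ g v := mem_filter.2 ⟨hD, hvD⟩
      exact ⟨mem_filter.2 ⟨mem_image_of_mem q h, D, hDm⟩, hDm⟩
  have hev : ∀ᶠ η in nhds (0 : ℝ), LPFeasible ℋ lam (fun v g => x v g + η * d (v, g)) := by
    refine Filter.Eventually.and ?_ (Filter.Eventually.and ?_ ?_)
    · refine Filter.eventually_all.2 fun v => Filter.eventually_all.2 fun g => ?_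
      refine (eventually_add_mul_le (p := - x v g) (q := - d (v, g)) (r := 0)
        (by simpa using hx0 v g) fun h => ?_).mono fun η h => by linarith
      rw [hdE, neg_zero]
      rw [hE]
      exact fun h' => h'.1 (by linarith)
    · refine Filter.eventually_all.2 fun v => ?_
      simp_rw [sum_add_distrib, ← mul_sum]
      exact eventually_add_mul_le (hxW v) (hdW v)
    · refine Filter.eventually_all.2 fun g => Filter.eventually_all.2 fun D =>
        Filter.eventually_imp_distrib_left.2 fun hD => ?_
      simp_rw [sum_add_distrib, ← mul_sum]
      exact eventually_add_mul_le (hxF g D hD) fun h => hdF g D ((h𝓛mem g D).2 ⟨hD, h⟩)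
  obtain ⟨ε, hε, hball⟩ := Metric.eventually_nhds_iff.1 hev
  have hhalf : |ε / 2| < ε := by rw [abs_of_pos (by positivity)]; linarith
  have hp := hball (y := ε / 2) (by rwa [dist_zero_right, Real.norm_eq_abs])
  have hm := hball (y := -(ε / 2)) (by rwa [dist_zero_right, Real.norm_eq_abs, abs_neg])
  have heq := hext hp hm ⟨1 / 2, 1 / 2, by norm_num, by norm_num, by norm_num, by
    ext v g
    simp only [Pi.add_apply, Pi.smul_apply, smul_eq_mul]
    ring⟩
  refine hd (funext fun ⟨v, g⟩ => ?_)
  have := congrFun (congrFun heq v) g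
  have h0 : ε / 2 * d (v, g) = 0 := by linarith
  simpa [hε.ne'] using h0

lemma isCompact_setOf_LPFeasible {W F : Type*} [Fintype F]
    (ℋ : F → Set (Finset W)) (lam : F → Finset W → ℤ) :
    IsCompact {x | LPFeasible ℋ lam x} := by
  refine (isCompact_univ_pi fun _ : W => isCompact_univ_pi fun _ : F =>
    isCompact_Icc (a := (0 : ℝ)) (b := 1)).of_isClosed_subset ?_ ?_
  · simp only [LPFeasible, Set.ofPred_and, Set.ofPred_forall]
    refine (isClosed_iInter fun w => isClosed_iInter fun f => ?_).inter
      ((isClosed_iInter fun w => ?_).inter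
        (isClosed_iInter fun f => isClosed_iInter fun D => isClosed_iInter fun _ => ?_))
    · exact isClosed_le (by fun_prop) (by fun_prop)
    · exact isClosed_le (by fun_prop) (by fun_prop)
    · exact isClosed_le (by fun_prop) (by fun_prop)
  · intro x hx
    simp only [Set.mem_pi, Set.mem_univ, true_implies]
    exact fun w f => ⟨hx.1 w f,
      (single_le_sum (fun g _ => hx.1 w g) (mem_univ f)).trans (hx.2.1 w)⟩

/-- With hierarchical constraints, the matching linear program has an integral optimum. -/
lemma exists_integral_optimum (α : W → F → ℝ) (ℋ : F → Set (Finset W)) (lam : F → Finset W → ℤ)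
    (hpos : ∀ f, ∀ D ∈ ℋ f, 0 ≤ lam f D) (hhier : ∀ f, Hierarchy (ℋ f)) :
    ∃ x, LPFeasible ℋ lam x ∧ (∀ w f, x w f = 0 ∨ x w f = 1) ∧
      ∀ y, LPFeasible ℋ lam y → LPobj α y ≤ LPobj α x := by
  let P : Set (W → F → ℝ) := {x | LPFeasible ℋ lam x}
  let l : StrongDual ℝ (W → F → ℝ) :=
    ∑ w, ∑ f, α w f • (ContinuousLinearMap.proj (R := ℝ) (φ := fun _ : F => ℝ) f).comp
      (ContinuousLinearMap.proj (R := ℝ) (φ := fun _ : W => F → ℝ) w)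
  have hl : ∀ x, l x = LPobj α x := by
    intro x
    simp [l, LPobj]
  have hP : IsCompact P := isCompact_setOf_LPFeasible ℋ lam
  have hPne : P.Nonempty :=
    ⟨0, fun _ _ => le_rfl, fun _ => by simp, fun f D hD => by simpa using hpos f D hD⟩
  have hexp : IsExposed ℝ P (l.toExposed P) := ContinuousLinearMap.toExposed.isExposed
  have hne : (l.toExposed P).Nonempty := by
    obtain ⟨x, hx, hmax⟩ := hP.exists_isMaxOn hPne l.continuous.continuousOn
    exact ⟨x, hx, hmax⟩
  obtain ⟨x, hx⟩ := (hexp.isCompact hP).extremePoints_nonempty hne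
  refine ⟨x, hx.1.1, eq_zero_or_one_of_mem_extremePoints ℋ lam hhier x
    (hexp.isExtreme.extremePoints_subset_extremePoints hx), fun y hy => ?_⟩
  rw [← hl, ← hl]
  exact hx.1.2 y hy

/-- Competitive prices: an assignment respecting the quotas and nonnegative worker prices, zero for
unmatched workers, at which every firm is assigned a surplus-maximizing feasible set. -/
lemma exists_competitive_prices (α : W → F → ℝ) (ℋ : F → Set (Finset W))
    (lam : F → Finset W → ℤ) (hpos : ∀ f, ∀ D ∈ ℋ f, 0 ≤ lam f D)
    (hhier : ∀ f, Hierarchy (ℋ f)) :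
    ∃ (X : W → Option F) (u : W → ℝ), (∀ f, assigned X f ∈ upperSets (ℋ f) (lam f)) ∧
      (∀ w, 0 ≤ u w) ∧ (∀ w, X w = none → u w = 0) ∧
      ∀ f, ∀ D ∈ upperSets (ℋ f) (lam f),
        ∑ w ∈ D, (α w f - u w) ≤ ∑ w ∈ assigned X f, (α w f - u w) := by
  classical
  obtain ⟨x, hx, hx01, hopt⟩ := exists_integral_optimum α ℋ lam hpos hhier
  let Q : Set (W → F → ℝ) :=
    {x | (∀ w f, 0 ≤ x w f) ∧ ∀ f, ∀ D ∈ ℋ f, ∑ w ∈ D, x w f ≤ lam f D}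
  have hQ : Convex ℝ Q := by
    intro y hy z hz p q hp hq hpq
    refine ⟨fun w f => ?_, fun f D hD => ?_⟩
    · exact add_nonneg (mul_nonneg hp (hy.1 w f)) (mul_nonneg hq (hz.1 w f))
    · simp only [Pi.add_apply, Pi.smul_apply, smul_eq_mul, sum_add_distrib, ← mul_sum]
      exact convex_Iic (lam f D : ℝ) (hy.2 f D hD) (hz.2 f D hD) hp hq hpq
  obtain ⟨u, hu, hdual⟩ := exists_prices α Q hQ
    ⟨fun _ _ => le_rfl, fun f D hD => by simpa using hpos f D hD⟩ x
    fun y hy hyW => hopt y ⟨hy.1, hyW, hy.2⟩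
  have hxQ : x ∈ Q := ⟨hx.1, hx.2.2⟩
  have hslack : ∀ w, u w * (∑ f, x w f - 1) = 0 := by
    have hle : ∀ w ∈ univ, u w * (∑ f, x w f - 1) ≤ 0 := fun w _ =>
      mul_nonpos_of_nonneg_of_nonpos (hu w) (by linarith [hx.2.1 w])
    have := (sum_eq_zero_iff_of_nonpos hle).1
      (le_antisymm (sum_nonpos hle) (by linarith [hdual x hxQ]))
    simpa using this
  have hsurplus : ∀ y ∈ Q, ∑ f, ∑ w, (α w f - u w) * y w f ≤
      ∑ f, ∑ w, (α w f - u w) * x w f := by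
    have e : ∀ y : W → F → ℝ, ∑ f, ∑ w, (α w f - u w) * y w f =
        LPobj α y - ∑ w, u w * (∑ f, y w f - 1) - ∑ w, u w := by
      intro y
      rw [sum_comm, LPobj, ← sum_sub_distrib, ← sum_sub_distrib]
      refine sum_congr rfl fun w _ => ?_
      simp only [sub_mul, sum_sub_distrib, ← mul_sum]
      ring
    intro y hy
    rw [e, e, sum_congr rfl fun w _ => hslack w]
    have := hdual y hy
    simp only [sum_const_zero]
    linarith
  let X : W → Option F := fun w => if h : ∃ f, x w f = 1 then some h.choose else none
  have huniq : ∀ w f g, x w f = 1 → x w g = 1 → f = g := by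
    intro w f g hf hg
    by_contra hfg
    have := (sum_le_univ_sum_of_nonneg (s := {f, g}) (fun h => hx.1 w h)).trans (hx.2.1 w)
    rw [sum_pair hfg] at this
    linarith
  have hX : ∀ w f, X w = some f ↔ x w f = 1 := by
    intro w f
    by_cases h : ∃ f, x w f = 1
    · simp only [X, dif_pos h, Option.some.injEq]
      exact ⟨fun e => e ▸ h.choose_spec, fun hf => huniq w _ _ h.choose_spec hf⟩
    · simp only [X, dif_neg h, reduceCtorEq, false_iff]
      exact fun hf => h ⟨f, hf⟩
  have hxX : ∀ w f, x w f = if w ∈ assigned X f then 1 else 0 := by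
    intro w f
    simp only [assigned, mem_filter, mem_univ, true_and, hX]
    rcases hx01 w f with h | h <;> simp [h]
  refine ⟨X, u, fun f D hD => ?_, hu, fun w hw => ?_, fun f D hD => ?_⟩
  · have := hx.2.2 f D hD
    simp only [hxX, sum_boole] at this
    rw [inter_comm, ← filter_mem_eq_inter]
    exact_mod_cast this
  · have hzero : ∀ f, x w f = 0 := fun f => (hx01 w f).resolve_right fun h => by
      simp [(hX w f).2 h] at hw
    simpa [hzero] using hslack w
  · let y : W → F → ℝ := fun w g => if g = f then (if w ∈ D then 1 else 0) else x w g
    have hy : y ∈ Q := by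
      refine ⟨fun w g => ?_, fun g D' hD' => ?_⟩
      · simp only [y]
        split_ifs
        exacts [zero_le_one, le_rfl, hx.1 w g]
      · by_cases hg : g = f
        · subst hg
          simp only [y, if_true, sum_boole]
          have := hD D' hD'
          rw [inter_comm, ← filter_mem_eq_inter] at this
          exact_mod_cast this
        · simpa only [y, if_neg hg] using hx.2.2 g D' hD'
    have h := hsurplus y hy
    rw [← add_sum_erase univ _ (mem_univ f), ← add_sum_erase univ _ (mem_univ f)] at h
    have hrest : ∑ g ∈ univ.erase f, ∑ w, (α w g - u w) * y w g =
        ∑ g ∈ univ.erase f, ∑ w, (α w g - u w) * x w g :=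
      sum_congr rfl fun g hg => by simp only [y, if_neg (ne_of_mem_erase hg)]
    rw [hrest, add_le_add_iff_right] at h
    simpa [y, hxX] using h

/-- **Existence of stable arrangements under hierarchical constraints.** If firms have
linear preferences and, for each firm `f`, the upper-bound constraint family `ℋ f` is a
hierarchy with nonnegative integer quotas `lam f`, then a stable arrangement exists. -/
theorem stable_exists_of_hierarchy
    {W F : Type*} [Fintype W] [DecidableEq W] [Fintype F] [DecidableEq F]
    (a c : W → F → ℝ) (ℋ : F → Set (Finset W)) (lam : F → Finset W → ℤ)
    (hpos : ∀ f : F, ∀ D ∈ ℋ f, 0 ≤ lam f D)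
    (hhier : ∀ f : F, Hierarchy (ℋ f)) :
    ∃ (X : W → Option F) (s : W → F → ℝ),
      Stable a (fun D f => ∑ w ∈ D, c w f) (fun f => upperSets (ℋ f) (lam f)) s X := by
  obtain ⟨X, u, hX, hu, hu0, hmax⟩ :=
    exists_competitive_prices (fun w f => a w f + c w f) ℋ lam hpos hhier
  let s : W → F → ℝ := fun w f => u w - a w f
  have hworker : ∀ w, workerPayoff a s X w = u w := by
    intro w
    rcases h : X w with _ | f
    · simp [workerPayoff, h, hu0 w h]
    · simp [workerPayoff, h, s]
  have hfirm : ∀ f, firmPayoff (fun D f => ∑ w ∈ D, c w f) s X f =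
      ∑ w ∈ assigned X f, (a w f + c w f - u w) := by
    intro f
    rw [firmPayoff, ← sum_sub_distrib]
    exact sum_congr rfl fun w _ => by ring
  refine ⟨X, s, fun f => Or.inl (hX f), fun w => (hworker w).symm ▸ hu w, fun f => ?_, ?_⟩
  · rw [hfirm]
    simpa using hmax f ∅ fun D hD => by simpa using hpos f D hD
  · rintro ⟨f, D, hD, r, hw, hf, hstrict⟩
    simp only [hworker] at hw hstrict
    rw [hfirm] at hf hstrict
    have hle := hmax f D hD
    have hsum : ∑ w ∈ D, (a w f + c w f - u w) =
        (∑ w ∈ D, c w f - ∑ w ∈ D, r w) + (∑ w ∈ D, (a w f + r w) - ∑ w ∈ D, u w) := by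
      simp only [sum_add_distrib, sum_sub_distrib]
      ring
    have hwle : ∑ w ∈ D, u w ≤ ∑ w ∈ D, (a w f + r w) := sum_le_sum hw
    rcases hstrict with ⟨w, hwD, hlt⟩ | hlt
    · have := sum_lt_sum hw ⟨w, hwD, hlt⟩
      linarith
    · linarith

end TwoSidedMatching
end

section
/- Suppose the linear program (LP) — maximize Σ_{w∈W} Σ_{f∈F} α(w,f) x_{w,f} over x ∈ ℝ^{W×F} subject to x ≥ 0, Σ_{f∈F} x_{w,f} ≤ 1 for every worker w, and Σ_{w∈D} x_{w,f} ≤ λ̄_D for every firm f and D ∈ ℋ_f — has an optimal solution X* with X*_{w,f} ∈ {0,1} for all (w,f). Then there exist salaries s : W × F → ℝ such that the arrangement (X*, s) is feasible and individually rational for all workers and firms, and its payoffs u, v satisfy Σ_{w∈D} α(w,f) ≤ Σ_{w∈D} u_w + v_f for every firm f and every feasible set D ∈ 𝒯_f ∪ {∅}; in particular (X*, s) is a stable arrangement. -/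
open Finset

namespace TwoSidedMatching

variable {W F : Type*} [Fintype W] [DecidableEq W] [Fintype F] [DecidableEq F]

/-- **Farkas' lemma** for finitely many linear functionals on a real vector space. -/
theorem farkas_finset {ι V : Type*} [AddCommGroup V] [Module ℝ V] (t : Finset ι)
    (g : ι → V →ₗ[ℝ] ℝ) (φ : V →ₗ[ℝ] ℝ)
    (h : ∀ v, (∀ i ∈ t, g i v ≤ 0) → φ v ≤ 0) :
    ∃ y : ι → ℝ, (∀ i, 0 ≤ y i) ∧ (∀ i ∉ t, y i = 0) ∧ ∀ v, φ v = ∑ i ∈ t, y i * g i v := by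
  classical
  induction t using Finset.induction_on generalizing g φ with
  | empty =>
    refine ⟨0, by simp, by simp, fun v => ?_⟩
    have h₁ := h v (by simp)
    have h₂ := h (-v) (by simp)
    simp only [map_neg] at h₂
    simp only [Finset.sum_empty]
    linarith
  | insert j t hj ih =>
    by_cases hs : ∀ v, (∀ i ∈ t, g i v ≤ 0) → φ v ≤ 0
    · obtain ⟨y, hy, hy0, hφ⟩ := ih g φ hs
      refine ⟨y, hy, fun i hi => hy0 i fun hit => hi (Finset.mem_insert_of_mem hit), fun v => ?_⟩
      rw [Finset.sum_insert hj, hy0 j hj, zero_mul, zero_add, hφ]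
    · push Not at hs
      obtain ⟨u, hu, hφu⟩ := hs
      have hju : 0 < g j u := by
        by_contra! hle
        exact hφu.not_ge (h u (by simpa using ⟨hle, hu⟩))
      -- project along `u` onto the kernel of `g j`
      let π : V →ₗ[ℝ] V := LinearMap.id - ((g j u)⁻¹ • g j).smulRight u
      have hπ (ψ : V →ₗ[ℝ] ℝ) (v : V) : ψ (π v) = ψ v - (g j u)⁻¹ * g j v * ψ u := by
        simp [π]
      obtain ⟨y, hy, hy0, hφ⟩ := ih (fun i => g i ∘ₗ π) (φ ∘ₗ π) fun v hv => by
        refine h (π v) fun i hi => ?_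
        rcases Finset.mem_insert.1 hi with rfl | hi
        · rw [hπ]
          field_simp
          simp
        · exact hv i hi
      have hsum : ∑ i ∈ t, y i * g i u ≤ 0 :=
        Finset.sum_nonpos fun i hi => mul_nonpos_of_nonneg_of_nonpos (hy i) (hu i hi)
      refine ⟨Function.update y j ((g j u)⁻¹ * (φ u - ∑ i ∈ t, y i * g i u)), fun i => ?_,
        fun i hi => ?_, fun v => ?_⟩
      · rcases eq_or_ne i j with rfl | hij
        · rw [Function.update_self]
          exact mul_nonneg (inv_nonneg.2 hju.le) (by linarith)
        · rw [Function.update_of_ne hij]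
          exact hy i
      · rw [Finset.mem_insert, not_or] at hi
        rw [Function.update_of_ne hi.1, hy0 i hi.2]
      · have hv := hφ v
        simp only [LinearMap.comp_apply, hπ, mul_sub, Finset.sum_sub_distrib] at hv
        have hrest : ∑ i ∈ t, Function.update y j
            ((g j u)⁻¹ * (φ u - ∑ i ∈ t, y i * g i u)) i * g i v = ∑ i ∈ t, y i * g i v :=
          Finset.sum_congr rfl fun i hi => by
            rw [Function.update_of_ne (ne_of_mem_of_not_mem hi hj)]
        have hpull : ∑ i ∈ t, y i * ((g j u)⁻¹ * g j v * g i u) =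
            (g j u)⁻¹ * g j v * ∑ i ∈ t, y i * g i u := by
          rw [Finset.mul_sum]
          exact Finset.sum_congr rfl fun i _ => by ring
        rw [Finset.sum_insert hj, Function.update_self, hrest]
        rw [hpull] at hv
        linarith

/-- **Linear programming duality**: an optimal solution of a linear program with finitely many
constraints admits nonnegative multipliers satisfying complementary slackness. -/
theorem exists_lp_multipliers {ι V : Type*} [Fintype ι] [AddCommGroup V] [Module ℝ V]
    (t : Finset ι) (g : ι → V →ₗ[ℝ] ℝ) (β : ι → ℝ) (φ : V →ₗ[ℝ] ℝ) (x : V)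
    (hx : ∀ i ∈ t, g i x ≤ β i) (hopt : ∀ z, (∀ i ∈ t, g i z ≤ β i) → φ z ≤ φ x) :
    ∃ y : ι → ℝ, (∀ i, 0 ≤ y i) ∧ (∀ i, y i ≠ 0 → i ∈ t ∧ g i x = β i) ∧
      ∀ v, φ v = ∑ i, y i * g i v := by
  classical
  obtain ⟨y, hy, hy0, hφ⟩ := farkas_finset (t.filter fun i => g i x = β i) g φ fun d hd => by
    have hev : ∀ᶠ ε : ℝ in nhdsWithin 0 (Set.Ioi 0), ∀ i ∈ t, g i (x + ε • d) ≤ β i := by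
      rw [Filter.eventually_all_finset]
      intro i hi
      simp only [map_add, map_smul, smul_eq_mul]
      rcases (hx i hi).eq_or_lt with heq | hlt
      · filter_upwards [self_mem_nhdsWithin] with ε hε
        have := mul_nonpos_of_nonneg_of_nonpos (le_of_lt hε)
          (hd i (Finset.mem_filter.2 ⟨hi, heq⟩))
        linarith
      · have hcont : Continuous fun ε : ℝ => g i x + ε * g i d := by fun_prop
        have := (hcont.tendsto 0).eventually_lt_const (u := β i) (by simpa using hlt)
        exact (this.filter_mono nhdsWithin_le_nhds).mono fun ε hε => le_of_lt hε
    obtain ⟨ε, hε, hpos⟩ := (hev.and self_mem_nhdsWithin).exists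
    have := hopt _ hε
    simp only [map_add, map_smul, smul_eq_mul] at this
    exact nonpos_of_mul_nonpos_right (by linarith) hpos
  refine ⟨y, hy, fun i hi => ?_, fun v => ?_⟩
  · by_contra hne
    exact hi (hy0 i (by simpa using hne))
  · rw [hφ]
    exact Finset.sum_subset (Finset.subset_univ _) fun i _ hi => by rw [hy0 i hi, zero_mul]

/-- Dual prices for an optimal solution of the matching LP with upper-bound constraints. -/
theorem exists_dual_prices (α : W → F → ℝ) (ℋ : F → Set (Finset W)) (lam : F → Finset W → ℤ)
    (x : W → F → ℝ) (hfeas : LPFeasible ℋ lam x)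
    (hopt : ∀ y, LPFeasible ℋ lam y → LPobj α y ≤ LPobj α x) :
    ∃ (p : W → ℝ) (q : F → Finset W → ℝ),
      (∀ w, 0 ≤ p w) ∧ (∀ f D, 0 ≤ q f D) ∧
      (∀ w, p w ≠ 0 → ∑ f, x w f = 1) ∧
      (∀ f D, q f D ≠ 0 → D ∈ ℋ f ∧ ∑ w ∈ D, x w f = lam f D) ∧
      (∀ w f, α w f ≤ p w + ∑ D, if w ∈ D then q f D else 0) ∧
      ∀ w f, x w f ≠ 0 → α w f = p w + ∑ D, if w ∈ D then q f D else 0 := by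
  classical
  let entry (w : W) (f : F) : (W → F → ℝ) →ₗ[ℝ] ℝ := LinearMap.proj f ∘ₗ LinearMap.proj w
  let g : (W × F) ⊕ W ⊕ (F × Finset W) → (W → F → ℝ) →ₗ[ℝ] ℝ :=
    Sum.elim (fun k => -entry k.1 k.2)
      (Sum.elim (fun w => ∑ f, entry w f) (fun k => ∑ w ∈ k.2, entry w k.1))
  let β : (W × F) ⊕ W ⊕ (F × Finset W) → ℝ :=
    Sum.elim (fun _ => 0) (Sum.elim (fun _ => 1) (fun k => lam k.1 k.2))
  let t : Finset ((W × F) ⊕ W ⊕ (F × Finset W)) :=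
    univ.filter (Sum.elim (fun _ => True) (Sum.elim (fun _ => True) (fun k => k.2 ∈ ℋ k.1)))
  let φ : (W → F → ℝ) →ₗ[ℝ] ℝ := ∑ w, ∑ f, α w f • entry w f
  have hφ (y) : φ y = LPobj α y := by simp [φ, entry, LPobj]
  have hlp (y) : (∀ i ∈ t, g i y ≤ β i) ↔ LPFeasible ℋ lam y := by
    simp [t, g, β, entry, LPFeasible]
  obtain ⟨y, hy, hslack, hdual⟩ := exists_lp_multipliers t g β φ x ((hlp x).2 hfeas) fun z hz => by
    rw [hφ, hφ]
    exact hopt z ((hlp z).1 hz)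
  have hentry (w f) : α w f = -y (.inl (w, f)) + (y (.inr (.inl w)) +
      ∑ D, if w ∈ D then y (.inr (.inr (f, D))) else 0) := by
    have h := hdual (Pi.single w (Pi.single f 1))
    simp only [Fintype.sum_sum_type, Fintype.sum_prod_type] at h
    rw [Finset.sum_comm (s := (univ : Finset F)) (t := (univ : Finset (Finset W)))] at h
    simpa [φ, g, entry, Pi.single_apply, ite_apply, ← ite_and, and_comm, ite_and] using h
  refine ⟨fun w => y (.inr (.inl w)), fun f D => y (.inr (.inr (f, D))), fun w => hy _,
    fun f D => hy _, fun w hw => ?_, fun f D hD => ?_, fun w f => ?_, fun w f hwf => ?_⟩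
  · simpa [g, β, entry] using (hslack _ hw).2
  · simpa [t, g, β, entry] using hslack _ hD
  · have := hy (.inl (w, f))
    linarith [hentry w f]
  · have : y (.inl (w, f)) = 0 := by
      by_contra hne
      exact hwf (by simpa [g, β, entry] using (hslack _ hne).2)
    linarith [hentry w f]

/-- A set satisfying the coalition inequality with the current payoffs cannot block. -/
theorem not_blocks_of_le {W F : Type*} [Fintype W] [DecidableEq F]
    (a : W → F → ℝ) (b : Finset W → F → ℝ) (𝒯 : F → Set (Finset W))
    (s : W → F → ℝ) (X : W → Option F)
    (h : ∀ f, ∀ D ∈ 𝒯 f, ∑ w ∈ D, a w f + b D f ≤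
      ∑ w ∈ D, workerPayoff a s X w + firmPayoff b s X f) : ¬ Blocks a b 𝒯 s X := by
  rintro ⟨f, D, hD, r, hw, hf, hlt⟩
  have hle := h f D hD
  have hsum := Finset.sum_le_sum hw
  rw [Finset.sum_add_distrib] at hsum
  rcases hlt with hlt | hlt
  · have hsum' := Finset.sum_lt_sum hw hlt
    rw [Finset.sum_add_distrib] at hsum'
    linarith
  · linarith

/-- The total price of the quotas used by a set of workers, counted by quota. -/
theorem sum_sum_ite_mem (q : Finset W → ℝ) (D : Finset W) :
    ∑ w ∈ D, ∑ D', (if w ∈ D' then q D' else 0) = ∑ D', q D' * ((D ∩ D').card : ℝ) := by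
  rw [Finset.sum_comm]
  refine Finset.sum_congr rfl fun D' _ => ?_
  rw [← Finset.sum_filter, Finset.filter_mem_eq_inter, Finset.sum_const, nsmul_eq_mul, mul_comm]

/-- **Duality and stable arrangements.** If the matching LP with upper-bound constraints
has an integral optimal solution `x`, then there are salaries `s` such that the induced
arrangement `(X*, s)` is feasible, individually rational for all workers and firms,
satisfies `Σ_{w∈D} α w f ≤ Σ_{w∈D} u w + v f` for every firm `f` and `D ∈ 𝒯 f ∪ {∅}`,
and in particular is stable. -/
theorem duality_gives_stable_arrangement
    {W F : Type*} [Fintype W] [DecidableEq W] [Fintype F] [DecidableEq F]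
    (a c : W → F → ℝ) (ℋ : F → Set (Finset W)) (lam : F → Finset W → ℤ)
    (hpos : ∀ f : F, ∀ D ∈ ℋ f, 0 ≤ lam f D)
    (x : W → F → ℝ)
    (hfeas : LPFeasible ℋ lam x)
    (hopt : ∀ y : W → F → ℝ, LPFeasible ℋ lam y →
      LPobj (fun w f => a w f + c w f) y ≤ LPobj (fun w f => a w f + c w f) x)
    (h01 : ∀ w f, x w f = 0 ∨ x w f = 1) :
    ∃ (X : W → Option F) (s : W → F → ℝ),
      (∀ w f, X w = some f ↔ x w f = 1) ∧
      Feasible (fun f => upperSets (ℋ f) (lam f)) X ∧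
      (∀ w, 0 ≤ workerPayoff a s X w) ∧
      (∀ f, 0 ≤ firmPayoff (fun D f' => ∑ w ∈ D, c w f') s X f) ∧
      (∀ f : F, ∀ D : Finset W, D ∈ upperSets (ℋ f) (lam f) ∨ D = ∅ →
        ∑ w ∈ D, (a w f + c w f) ≤
          (∑ w ∈ D, workerPayoff a s X w) +
            firmPayoff (fun D' f' => ∑ w ∈ D', c w f') s X f) ∧
      Stable a (fun D f => ∑ w ∈ D, c w f) (fun f => upperSets (ℋ f) (lam f)) s X := by
  classical
  obtain ⟨p, q, hp, hq, hpslack, hqslack, hle, heq⟩ :=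
    exists_dual_prices (fun w f => a w f + c w f) ℋ lam x hfeas hopt
  obtain ⟨hx0, hx1, hxD⟩ := hfeas
  have huniq (w f f') (h : x w f = 1) (h' : x w f' = 1) : f = f' := by
    by_contra hne
    have := Finset.sum_le_sum_of_subset_of_nonneg (Finset.subset_univ {f, f'})
      fun i _ _ => hx0 w i
    rw [Finset.sum_pair hne] at this
    linarith [hx1 w]
  let X : W → Option F := fun w => if h : ∃ f, x w f = 1 then some h.choose else none
  have hX (w f) : X w = some f ↔ x w f = 1 := by
    by_cases h : ∃ f, x w f = 1
    · simp only [X, dif_pos h, Option.some.injEq]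
      exact ⟨fun e => e ▸ h.choose_spec, huniq w _ _ h.choose_spec⟩
    · simp only [X, dif_neg h, reduceCtorEq, false_iff]
      exact fun h' => h ⟨f, h'⟩
  have hxX (w f) : x w f = if X w = some f then 1 else 0 := by
    rcases h01 w f with h | h <;> simp [hX, h]
  let s : W → F → ℝ := fun w f => p w - a w f
  have hu (w) : workerPayoff a s X w = p w := by
    cases hw : X w with
    | some f => simp [workerPayoff, hw, s]
    | none =>
      simp only [workerPayoff, hw]
      by_contra hne
      have := hpslack w (Ne.symm hne)
      simp [hxX, hw] at this
  have hcard (f) (D : Finset W) : ∑ w ∈ D, x w f = ((assigned X f ∩ D).card : ℝ) := by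
    simp_rw [hxX]
    rw [Finset.sum_boole, assigned, Finset.filter_inter, Finset.univ_inter]
  have hv (f) : firmPayoff (fun D f' => ∑ w ∈ D, c w f') s X f = ∑ D, q f D * (lam f D : ℝ) := by
    calc _ = ∑ w ∈ assigned X f, ∑ D, (if w ∈ D then q f D else 0) := by
          rw [firmPayoff, ← Finset.sum_sub_distrib]
          refine Finset.sum_congr rfl fun w hw => ?_
          have := heq w f (by simp [(hX w f).1 (by simpa [assigned] using hw)])
          simp only [s]
          linarith
      _ = _ := by
          rw [sum_sum_ite_mem]
          refine Finset.sum_congr rfl fun D _ => ?_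
          rcases eq_or_ne (q f D) 0 with h | h
          · simp [h]
          · rw [← hcard, (hqslack f D h).2]
  have hfeasible : Feasible (fun f => upperSets (ℋ f) (lam f)) X := fun f => Or.inl fun D hD => by
    have := hxD f D hD
    rw [hcard] at this
    exact_mod_cast this
  have hu0 (w) : 0 ≤ workerPayoff a s X w := (hu w).symm ▸ hp w
  have hv0 (f) : 0 ≤ firmPayoff (fun D f' => ∑ w ∈ D, c w f') s X f := by
    rw [hv]
    refine Finset.sum_nonneg fun D _ => ?_
    rcases eq_or_ne (q f D) 0 with h | h
    · simp [h]
    · exact mul_nonneg (hq f D) (by exact_mod_cast hpos f D (hqslack f D h).1)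
  have hcoal (f) (D : Finset W) (hD : D ∈ upperSets (ℋ f) (lam f)) :
      ∑ w ∈ D, (a w f + c w f) ≤ (∑ w ∈ D, workerPayoff a s X w) +
        firmPayoff (fun D' f' => ∑ w ∈ D', c w f') s X f := by
    rw [hv]
    simp_rw [hu]
    calc _ ≤ ∑ w ∈ D, (p w + ∑ D', if w ∈ D' then q f D' else 0) :=
          Finset.sum_le_sum fun w _ => hle w f
      _ = ∑ w ∈ D, p w + ∑ D', q f D' * ((D ∩ D').card : ℝ) := by
          rw [Finset.sum_add_distrib, sum_sum_ite_mem]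
      _ ≤ _ := by
          gcongr _ + ?_
          refine Finset.sum_le_sum fun D' _ => ?_
          rcases eq_or_ne (q f D') 0 with h | h
          · simp [h]
          · exact mul_le_mul_of_nonneg_left (by exact_mod_cast hD D' (hqslack f D' h).1) (hq f D')
  refine ⟨X, s, hX, hfeasible, hu0, hv0, fun f D hD => ?_, hfeasible, hu0, hv0,
    not_blocks_of_le _ _ _ _ _ fun f D hD => ?_⟩
  · rcases hD with hD | rfl
    · exact hcoal f D hD
    · simpa using hv0 f
  · simpa only [Finset.sum_add_distrib] using hcoal f D hD

end TwoSidedMatching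
end
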